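/- arXiv:2407.10429 — 2 statements merged into one kernel-verified Lean document; each statement's English description precedes it below -/
import Mathlib

section
/- Let E be a real inner product space and let x, y ∈ E satisfy ‖x‖ ≥ 1 and ‖y‖ ≥ 1. Then ‖ x/‖x‖ − y/‖y‖ ‖ ≤ ‖x − y‖. That is, the radial projection onto the unit sphere is nonexpansive on the complement of the open unit ball. -/
/-!
Splitting a displacement into its radial and its angular part gives
`‖x - y‖² = (‖x‖ - ‖y‖)² + ‖x‖ ‖y‖ ‖x / ‖x‖ - y / ‖y‖‖²`. The radial part is nonnegative, and
the weight `‖x‖ ‖y‖` of the angular part is at least `1` outside the open unit ball.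
-/

theorem norm_inv_norm_smul {E : Type*} [SeminormedAddCommGroup E] [NormedSpace ℝ E] {x : E}
    (hx : ‖x‖ ≠ 0) : ‖‖x‖⁻¹ • x‖ = 1 := by
  rw [norm_smul, norm_inv, norm_norm, inv_mul_cancel₀ hx]

section RadialProjection

variable {E : Type*} [SeminormedAddCommGroup E] [InnerProductSpace ℝ E]

theorem norm_mul_norm_mul_norm_sub_inv_norm_smul_sq (x y : E) :
    ‖x‖ * ‖y‖ * ‖‖x‖⁻¹ • x - ‖y‖⁻¹ • y‖ ^ 2 = 2 * (‖x‖ * ‖y‖ - inner ℝ x y) := by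
  rcases eq_or_ne ‖x‖ 0 with hx | hx
  · simp [hx, inner_eq_zero_of_left y hx]
  rcases eq_or_ne ‖y‖ 0 with hy | hy
  · simp [hy, inner_eq_zero_of_right x hy]
  rw [norm_sub_sq_real, norm_inv_norm_smul hx, norm_inv_norm_smul hy, real_inner_smul_left,
    real_inner_smul_right]
  field_simp
  ring

theorem norm_sub_sq_eq_norm_sub_norm_sq_add (x y : E) :
    ‖x - y‖ ^ 2 =
      (‖x‖ - ‖y‖) ^ 2 + ‖x‖ * ‖y‖ * ‖‖x‖⁻¹ • x - ‖y‖⁻¹ • y‖ ^ 2 := by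
  rw [norm_mul_norm_mul_norm_sub_inv_norm_smul_sq, norm_sub_sq_real]
  ring

theorem radial_projection_nonexpansive_general (x y : E) (hxy : 1 ≤ ‖x‖ * ‖y‖) :
    ‖‖x‖⁻¹ • x - ‖y‖⁻¹ • y‖ ≤ ‖x - y‖ := by
  refine le_of_sq_le_sq ?_ (norm_nonneg _)
  calc ‖‖x‖⁻¹ • x - ‖y‖⁻¹ • y‖ ^ 2
      ≤ ‖x‖ * ‖y‖ * ‖‖x‖⁻¹ • x - ‖y‖⁻¹ • y‖ ^ 2 := le_mul_of_one_le_left (sq_nonneg _) hxy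
    _ ≤ (‖x‖ - ‖y‖) ^ 2 + ‖x‖ * ‖y‖ * ‖‖x‖⁻¹ • x - ‖y‖⁻¹ • y‖ ^ 2 :=
        le_add_of_nonneg_left (sq_nonneg _)
    _ = ‖x - y‖ ^ 2 := (norm_sub_sq_eq_norm_sub_norm_sq_add x y).symm

end RadialProjection

/-- The radial projection onto the unit sphere of a real inner product space is
nonexpansive on the complement of the open unit ball (pointwise core of Bartels'
energy-decrease theorem, Theorem A.4). -/
theorem radial_projection_nonexpansive
    {E : Type*} [NormedAddCommGroup E] [InnerProductSpace ℝ E]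
    (x y : E) (hx : 1 ≤ ‖x‖) (hy : 1 ≤ ‖y‖) :
    ‖‖x‖⁻¹ • x - ‖y‖⁻¹ • y‖ ≤ ‖x - y‖ :=
  radial_projection_nonexpansive_general x y (one_le_mul_of_one_le_of_one_le hx hy)
end

section
/- Let N ≥ 1 and let a : Fin N → Fin N → ℝ be a symmetric array (a i j = a j i) with a i j ≤ 0 whenever i ≠ j and with zero row sums, Σⱼ a i j = 0 for every i. Let u : Fin N → ℝ³ satisfy ‖u i‖ ≥ 1 for every i, and let û i = u i / ‖u i‖. Then Σᵢ Σⱼ a i j ⟨û i, û j⟩ ≤ Σᵢ Σⱼ a i j ⟨u i, u j⟩. (This is the discrete algebraic form of Theorem A.4: for a stiffness matrix a i j = ∫ ∇φᵢ · ∇φⱼ of piecewise linear hat functions satisfying the acuteness condition ∫ ∇φᵢ · ∇φⱼ ≤ 0 for i ≠ j, normalising the nodal values onto the unit sphere does not increase the Dirichlet energy.) -/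
open scoped RealInnerProductSpace

/-!
Polarisation writes the energy as a combination of the squared nodal norms `‖u i‖ ^ 2`, with the
row and column sums of `a` as coefficients, and of the squared differences `‖u i - u j‖ ^ 2`, with
the coefficients `-a i j`, which matter only for `i ≠ j`. If all of these are nonnegative, the
energy cannot increase under a map that increases neither norms nor distances. Normalisation is such
a map outside the open unit ball, because
`‖x - y‖ ^ 2 = ‖x‖ * ‖y‖ * ‖normalize x - normalize y‖ ^ 2 + (‖x‖ - ‖y‖) ^ 2`.
-/

open NormedSpace (normalize norm_normalize norm_smul_normalize)

section Normalize

variable {E : Type*} [NormedAddCommGroup E] [InnerProductSpace ℝ E]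

theorem norm_sub_sq_eq_mul_norm_normalize_sub_sq_add (x y : E) :
    ‖x - y‖ ^ 2 = ‖x‖ * ‖y‖ * ‖normalize x - normalize y‖ ^ 2 + (‖x‖ - ‖y‖) ^ 2 := by
  rcases eq_or_ne x 0 with rfl | hx
  · simp
  rcases eq_or_ne y 0 with rfl | hy
  · simp
  have inner_eq : ⟪x, y⟫ = ‖x‖ * ‖y‖ * ⟪normalize x, normalize y⟫ := by
    rw [mul_assoc, ← real_inner_smul_right, ← real_inner_smul_left, norm_smul_normalize,
      norm_smul_normalize]
  rw [norm_sub_sq_real, norm_sub_sq_real, norm_normalize hx, norm_normalize hy, inner_eq]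
  ring

theorem norm_normalize_sub_normalize_le {x y : E} (hxy : 1 ≤ ‖x‖ * ‖y‖) :
    ‖normalize x - normalize y‖ ≤ ‖x - y‖ := by
  refine le_of_sq_le_sq ?_ (norm_nonneg _)
  calc ‖normalize x - normalize y‖ ^ 2
      ≤ ‖x‖ * ‖y‖ * ‖normalize x - normalize y‖ ^ 2 := le_mul_of_one_le_left (sq_nonneg _) hxy
    _ ≤ ‖x‖ * ‖y‖ * ‖normalize x - normalize y‖ ^ 2 + (‖x‖ - ‖y‖) ^ 2 :=
        le_add_of_nonneg_right (sq_nonneg _)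
    _ = ‖x - y‖ ^ 2 := (norm_sub_sq_eq_mul_norm_normalize_sub_sq_add x y).symm

end Normalize

section DiscreteEnergy

variable {ι E F : Type*} [Fintype ι]
  [NormedAddCommGroup E] [InnerProductSpace ℝ E] [NormedAddCommGroup F] [InnerProductSpace ℝ F]

/-- The Dirichlet energy of the finite element field with nodal values `u`, for the stiffness
matrix `a`. As in the nodal expansion of `∫ ‖∇u‖ ^ 2`, there is no factor `1 / 2`. -/
def discreteEnergy (a : ι → ι → ℝ) (u : ι → E) : ℝ :=
  ∑ i, ∑ j, a i j * ⟪u i, u j⟫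

theorem two_mul_discreteEnergy (a : ι → ι → ℝ) (u : ι → E) :
    2 * discreteEnergy a u = ∑ i, (∑ j, a i j) * ‖u i‖ ^ 2 + ∑ j, (∑ i, a i j) * ‖u j‖ ^ 2 +
      ∑ i, ∑ j, -a i j * ‖u i - u j‖ ^ 2 := by
  have polarisation (i j : ι) : 2 * (a i j * ⟪u i, u j⟫) =
      a i j * ‖u i‖ ^ 2 + a i j * ‖u j‖ ^ 2 + -a i j * ‖u i - u j‖ ^ 2 := by
    rw [norm_sub_sq_real]
    ring
  have column_sums : ∑ j, (∑ i, a i j) * ‖u j‖ ^ 2 = ∑ i, ∑ j, a i j * ‖u j‖ ^ 2 := by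
    simp only [Finset.sum_mul]
    exact Finset.sum_comm
  rw [column_sums]
  simp only [discreteEnergy, Finset.mul_sum, Finset.sum_mul, polarisation, Finset.sum_add_distrib]

theorem discreteEnergy_le_of_norm_le_of_norm_sub_le {a : ι → ι → ℝ}
    (hoff : ∀ i j, i ≠ j → a i j ≤ 0) (hrow : ∀ i, 0 ≤ ∑ j, a i j) (hcol : ∀ j, 0 ≤ ∑ i, a i j)
    {u : ι → E} {v : ι → F} (hnorm : ∀ i, ‖v i‖ ≤ ‖u i‖)
    (hdist : ∀ i j, ‖v i - v j‖ ≤ ‖u i - u j‖) :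
    discreteEnergy a v ≤ discreteEnergy a u := by
  have sq_norm_le (i : ι) : ‖v i‖ ^ 2 ≤ ‖u i‖ ^ 2 := pow_le_pow_left₀ (norm_nonneg _) (hnorm i) 2
  have differences (i j : ι) : -a i j * ‖v i - v j‖ ^ 2 ≤ -a i j * ‖u i - u j‖ ^ 2 := by
    rcases eq_or_ne i j with rfl | hij
    · simp
    · exact mul_le_mul_of_nonneg_left (pow_le_pow_left₀ (norm_nonneg _) (hdist i j) 2)
        (neg_nonneg.2 (hoff i j hij))
  refine le_of_mul_le_mul_left ?_ (zero_lt_two' ℝ)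
  rw [two_mul_discreteEnergy, two_mul_discreteEnergy]
  gcongr ∑ i, ?_ + ∑ j, ?_ + ∑ i, ∑ j, ?_ with i _ j _ i _ j _
  · exact mul_le_mul_of_nonneg_left (sq_norm_le i) (hrow i)
  · exact mul_le_mul_of_nonneg_left (sq_norm_le j) (hcol j)
  · exact differences i j

theorem normalisation_decreases_discrete_energy_general {a : ι → ι → ℝ}
    (hoff : ∀ i j, i ≠ j → a i j ≤ 0) (hrow : ∀ i, 0 ≤ ∑ j, a i j) (hcol : ∀ j, 0 ≤ ∑ i, a i j)
    {u : ι → E} (hu : ∀ i, 1 ≤ ‖u i‖) :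
    discreteEnergy a (fun i ↦ normalize (u i)) ≤ discreteEnergy a u := by
  refine discreteEnergy_le_of_norm_le_of_norm_sub_le hoff hrow hcol (fun i ↦ ?_) fun i j ↦
    norm_normalize_sub_normalize_le (one_le_mul_of_one_le_of_one_le (hu i) (hu j))
  have hne : u i ≠ 0 := norm_pos_iff.1 (zero_lt_one.trans_le (hu i))
  exact (norm_normalize hne).trans_le (hu i)

end DiscreteEnergy

/-- Discrete algebraic form of Theorem A.4: for a symmetric stiffness matrix with
nonpositive off-diagonal entries and zero row sums, normalising the nodal values onto
the unit sphere does not increase the Dirichlet energy. -/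
theorem normalisation_decreases_discrete_energy
    (N : ℕ) (hN : 1 ≤ N) (a : Fin N → Fin N → ℝ)
    (hsymm : ∀ i j, a i j = a j i)
    (hoff : ∀ i j, i ≠ j → a i j ≤ 0)
    (hrow : ∀ i, ∑ j, a i j = 0)
    (u : Fin N → EuclideanSpace ℝ (Fin 3))
    (hu : ∀ i, 1 ≤ ‖u i‖) :
    ∑ i, ∑ j, a i j * ⟪‖u i‖⁻¹ • u i, ‖u j‖⁻¹ • u j⟫ ≤
      ∑ i, ∑ j, a i j * ⟪u i, u j⟫ := by
  have hcol (j : Fin N) : ∑ i, a i j = 0 := by simpa only [hsymm _ j] using hrow j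
  exact normalisation_decreases_discrete_energy_general hoff (fun i ↦ (hrow i).ge)
    (fun j ↦ (hcol j).ge) hu
end
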